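/- arXiv:1810.12845 — 2 statements merged into one kernel-verified Lean document; each statement's English description precedes it below -/
import Mathlib

section
/- Let n ≥ 3 and let Γ_n* = {f ∈ V_n : ⟨f,v⟩ ≥ 0 for all v ∈ closure(Γ_n)} be the cone of valid quantum information inequalities. Then Γ_n* is not the direct sum of its balanced part and another cone: there is no convex cone C ⊆ V_n with Submodule.span ℝ C ⊓ B_n = ⊥ and Γ_n* = (Γ_n* ∩ B_n) + C (Minkowski sum of sets). -/
open scoped ComplexOrder

/-- Von Neumann entropy (base 2) of a matrix: `-∑ k, λ_k * log₂ λ_k` over the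
eigenvalues of the matrix if it is Hermitian (and `0` otherwise). -/
noncomputable def vonNeumannEntropy {X : Type} [Fintype X] [DecidableEq X]
    (M : Matrix X X ℂ) : ℝ :=
  letI := Classical.propDecidable M.IsHermitian
  if h : M.IsHermitian then -∑ k, h.eigenvalues k * Real.logb 2 (h.eigenvalues k)
  else 0

/-- Glue an assignment on `I` and an assignment on `Iᶜ` to a full assignment. -/
def glueAssignment {n : ℕ} {d : Fin n → ℕ} (I : Finset (Fin n))
    (a : ∀ i : I, Fin (d i.1)) (c : ∀ i : (Iᶜ : Finset (Fin n)), Fin (d i.1)) :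
    ∀ i : Fin n, Fin (d i) :=
  fun i => if h : i ∈ I then a ⟨i, h⟩ else c ⟨i, Finset.mem_compl.mpr h⟩

/-- The reduced density matrix `ρ_I`: partial trace of `ρ` over the systems
outside of `I`. -/
noncomputable def reducedState {n : ℕ} {d : Fin n → ℕ}
    (ρ : Matrix (∀ i, Fin (d i)) (∀ i, Fin (d i)) ℂ) (I : Finset (Fin n)) :
    Matrix (∀ i : I, Fin (d i.1)) (∀ i : I, Fin (d i.1)) ℂ :=
  fun a b => ∑ c : ∀ i : (Iᶜ : Finset (Fin n)), Fin (d i.1),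
    ρ (glueAssignment I a c) (glueAssignment I b c)

/-- The entropy vector `s(ρ)` of an `n`-partite density matrix. -/
noncomputable def qEntropyVector {n : ℕ} {d : Fin n → ℕ}
    (ρ : Matrix (∀ i, Fin (d i)) (∀ i, Fin (d i)) ℂ) : Finset (Fin n) → ℝ :=
  fun I => vonNeumannEntropy (reducedState ρ I)

/-- The quantum entropy region `Γ_n`: all entropy vectors of `n`-partite density
matrices (positive semidefinite, trace one), over all local dimensions. -/
def quantumEntropyRegion (n : ℕ) : Set (Finset (Fin n) → ℝ) :=
  { v | ∃ (d : Fin n → ℕ) (_ : ∀ i, 1 ≤ d i)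
      (ρ : Matrix (∀ i, Fin (d i)) (∀ i, Fin (d i)) ℂ),
        ρ.PosSemidef ∧ ρ.trace = 1 ∧ v = qEntropyVector ρ }

/-- The standard pairing `⟨f, v⟩ = ∑_{I ⊆ Fin n} f I * v I` on entropy space. -/
noncomputable def entPairing {n : ℕ} (f v : Finset (Fin n) → ℝ) : ℝ :=
  ∑ I : Finset (Fin n), f I * v I

/-- The dual cone of a subset of entropy space. -/
noncomputable def dualCone {n : ℕ} (K : Set (Finset (Fin n) → ℝ)) :
    Set (Finset (Fin n) → ℝ) :=
  {f | ∀ v ∈ K, 0 ≤ entPairing f v}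

/-- The balanced subspace `B_n`: functionals `f` with `∑_{I ∋ i} f I = 0` for
every `i`. -/
def balancedSubspace (n : ℕ) : Submodule ℝ (Finset (Fin n) → ℝ) where
  carrier := {f | ∀ i : Fin n, ∑ I ∈ Finset.univ.filter (fun I => i ∈ I), f I = 0}
  add_mem' := by
    intro a b ha hb
    intro i
    simp only [Pi.add_apply, Finset.sum_add_distrib]
    rw [ha i, hb i, add_zero]
  zero_mem' := by
    intro i
    simp
  smul_mem' := by
    intro c a ha
    intro i
    simp only [Pi.smul_apply, smul_eq_mul, ← Finset.mul_sum]
    rw [ha i, mul_zero]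

open Pointwise

/-!
Decomposing the inequalities `0 ≤ v {i}` along a complement `C` yields a family `c i` in `C` dual
to the indicators `I ↦ [i ∈ I]`. As `span C` meets the balanced subspace trivially, subtracting
from a valid inequality `f` the combination of the `c i` with the same membership sums leaves
exactly the balanced part of `f`, hence a valid inequality. Nonnegativity of the entropy of the
parties `K` therefore improves to `∑ i ∈ K, c i · v ≤ v K`, and the Araki–Lieb inequality
`v J ≤ v (J ∪ K) + v K` to `2 ∑ i ∈ K, c i · v ≤ v (J ∪ K) + v K - v J`.

Write `s v` for the sum of `c i · v` over three fixed parties. For the entropy vector `X` of bits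
that are uniform subject to having sum zero, `s X ≤ 2`. For the entropy vector `G` of a shared
classical bit, Araki–Lieb for each pair against the third party gives `s G ≤ 3 / 4`. For the entropy
vector `T` of the state `(|000⟩ + |111⟩)/√2`, validity of the `c i` gives `0 ≤ s T`. But
`X + G - T` is the sum of the indicators of the three parties, so `s X + s G = s T + 3`, which is
impossible.
-/

open Matrix

section HermitianEigenvalues

variable {X : Type*} [Fintype X] [DecidableEq X] {M : Matrix X X ℂ}

lemma sum_eigenvalues_eq_one (h : M.IsHermitian) (htr : M.trace = 1) :
    ∑ k, h.eigenvalues k = 1 := by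
  refine Complex.ofReal_injective ?_
  rw [Complex.ofReal_sum, Complex.ofReal_one, ← htr]
  exact h.trace_eq_sum_eigenvalues.symm

lemma eigenvalues_sq_of_mul_self_eq_smul (h : M.IsHermitian) {r : ℝ}
    (hM : M * M = (r : ℂ) • M) (k : X) :
    h.eigenvalues k * h.eigenvalues k = r * h.eigenvalues k := by
  have hD := congrArg (Unitary.conjStarAlgAut ℂ _ (star h.eigenvectorUnitary)) hM
  rw [map_mul, map_smul, h.conjStarAlgAut_star_eigenvectorUnitary, diagonal_mul_diagonal] at hD
  have hk := congrFun₂ hD k k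
  rw [Matrix.smul_apply, diagonal_apply_eq, diagonal_apply_eq] at hk
  exact Complex.ofReal_injective (by simpa using hk)

lemma eigenvectorUnitary_conjTranspose_mul_mul (h : M.IsHermitian) :
    (h.eigenvectorUnitary : Matrix X X ℂ)ᴴ * M * (h.eigenvectorUnitary : Matrix X X ℂ) =
      diagonal (RCLike.ofReal ∘ h.eigenvalues) := by
  rw [← h.conjStarAlgAut_star_eigenvectorUnitary, Unitary.conjStarAlgAut_star_apply]
  rfl

lemma sum_normSq_row_unitary (U : unitaryGroup X ℂ) (i : X) :
    ∑ k, Complex.normSq ((U : Matrix X X ℂ) i k) = 1 := by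
  have h := congrFun₂ (mem_unitaryGroup_iff.1 U.2) i i
  simp only [mul_apply, star_apply, one_apply_eq, RCLike.star_def, Complex.mul_conj] at h
  exact_mod_cast h

lemma sum_normSq_col_unitary (U : unitaryGroup X ℂ) (k : X) :
    ∑ i, Complex.normSq ((U : Matrix X X ℂ) i k) = 1 := by
  have h := sum_normSq_row_unitary (star U) k
  simpa only [Unitary.coe_star, star_apply, RCLike.star_def, Complex.normSq_conj] using h

lemma re_diag_eq_sum_normSq_mul_eigenvalues (h : M.IsHermitian) (i : X) :
    (M i i).re =
      ∑ k, Complex.normSq ((h.eigenvectorUnitary : Matrix X X ℂ) i k) * h.eigenvalues k := by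
  conv_lhs => rw [h.spectral_theorem]
  rw [Unitary.conjStarAlgAut_apply, mul_apply, Complex.re_sum]
  refine Finset.sum_congr rfl fun k _ => ?_
  rw [mul_diagonal, star_apply, RCLike.star_def, mul_right_comm, Complex.mul_conj]
  simp

lemma sum_map_eigenvalues_le_sum_map_diag (h : M.IsHermitian) {s : Set ℝ} {f : ℝ → ℝ}
    (hf : ConcaveOn ℝ s f) (hs : ∀ k, h.eigenvalues k ∈ s) :
    ∑ k, f (h.eigenvalues k) ≤ ∑ i, f (M i i).re := by
  let w (i k : X) : ℝ := Complex.normSq ((h.eigenvectorUnitary : Matrix X X ℂ) i k)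
  calc ∑ k, f (h.eigenvalues k)
      = ∑ k, (∑ i, w i k) * f (h.eigenvalues k) := by simp only [w, sum_normSq_col_unitary, one_mul]
    _ = ∑ i, ∑ k, w i k * f (h.eigenvalues k) := by
        simp only [Finset.sum_mul]
        exact Finset.sum_comm
    _ ≤ ∑ i, f (∑ k, w i k * h.eigenvalues k) := Finset.sum_le_sum fun i _ =>
        hf.le_map_sum (fun k _ => Complex.normSq_nonneg _) (sum_normSq_row_unitary _ i)
          fun k _ => hs k
    _ = ∑ i, f (M i i).re := by simp only [w, re_diag_eq_sum_normSq_mul_eigenvalues h]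

end HermitianEigenvalues

section VonNeumannEntropy

variable {X Y : Type} [Fintype X] [DecidableEq X] [Fintype Y] [DecidableEq Y]
  {M : Matrix X X ℂ}

lemma vonNeumannEntropy_eq_sum_negMulLog (h : M.IsHermitian) :
    vonNeumannEntropy M = (∑ k, Real.negMulLog (h.eigenvalues k)) / Real.log 2 := by
  simp only [vonNeumannEntropy, dif_pos h, Real.negMulLog, Real.logb, Finset.sum_div,
    ← Finset.sum_neg_distrib]
  exact Finset.sum_congr rfl fun k _ => by ring

lemma vonNeumannEntropy_eq_sum_roots (h : M.IsHermitian) :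
    vonNeumannEntropy M =
      (M.charpoly.roots.map fun z => Real.negMulLog z.re).sum / Real.log 2 := by
  rw [vonNeumannEntropy_eq_sum_negMulLog h, h.roots_charpoly_eq_eigenvalues, Multiset.map_map]
  rfl

lemma vonNeumannEntropy_eq_of_charpoly_eq {N : Matrix Y Y ℂ} (hM : M.IsHermitian)
    (hN : N.IsHermitian) (h : M.charpoly = N.charpoly) :
    vonNeumannEntropy M = vonNeumannEntropy N := by
  rw [vonNeumannEntropy_eq_sum_roots hM, vonNeumannEntropy_eq_sum_roots hN, h]

lemma vonNeumannEntropy_transpose (h : M.IsHermitian) :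
    vonNeumannEntropy Mᵀ = vonNeumannEntropy M :=
  vonNeumannEntropy_eq_of_charpoly_eq h.transpose h (charpoly_transpose M)

lemma vonNeumannEntropy_submatrix_equiv (h : M.IsHermitian) (e : Y ≃ X) :
    vonNeumannEntropy (M.submatrix e e) = vonNeumannEntropy M :=
  vonNeumannEntropy_eq_of_charpoly_eq (h.submatrix e) h (charpoly_reindex e.symm M)

lemma vonNeumannEntropy_conjTranspose_mul_mul (h : M.IsHermitian) {U : Matrix X X ℂ}
    (hU : U * Uᴴ = 1) : vonNeumannEntropy (Uᴴ * M * U) = vonNeumannEntropy M := by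
  refine vonNeumannEntropy_eq_of_charpoly_eq (isHermitian_conjTranspose_mul_mul U h) h ?_
  rw [Matrix.mul_assoc, charpoly_mul_comm, Matrix.mul_assoc, hU, Matrix.mul_one]

lemma vonNeumannEntropy_mul_comm (A : Matrix X Y ℂ) (B : Matrix Y X ℂ)
    (hAB : (A * B).IsHermitian) (hBA : (B * A).IsHermitian) :
    vonNeumannEntropy (A * B) = vonNeumannEntropy (B * A) := by
  have h := congrArg (fun p => (p.roots.map fun z : ℂ => Real.negMulLog z.re).sum)
    (charpoly_mul_comm' A B)
  have hne {Z : Type} [Fintype Z] [DecidableEq Z] (m : ℕ) (N : Matrix Z Z ℂ) :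
      Polynomial.X ^ m * N.charpoly ≠ 0 :=
    ((Polynomial.monic_X_pow m).mul N.charpoly_monic).ne_zero
  simp only [Polynomial.roots_mul (hne _ _), Polynomial.roots_X_pow, Multiset.map_add,
    Multiset.map_nsmul, Multiset.map_singleton, Complex.zero_re, Real.negMulLog_zero,
    Multiset.sum_add, Multiset.sum_nsmul, Multiset.sum_singleton, smul_zero, zero_add] at h
  rw [vonNeumannEntropy_eq_sum_roots hAB, vonNeumannEntropy_eq_sum_roots hBA, h]

lemma vonNeumannEntropy_nonneg (h : M.PosSemidef) (htr : M.trace = 1) :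
    0 ≤ vonNeumannEntropy M := by
  rw [vonNeumannEntropy_eq_sum_negMulLog h.isHermitian]
  refine div_nonneg (Finset.sum_nonneg fun k _ => ?_) (Real.log_nonneg one_le_two)
  refine Real.negMulLog_nonneg (h.eigenvalues_nonneg k) ?_
  rw [← sum_eigenvalues_eq_one h.isHermitian htr]
  exact Finset.single_le_sum (fun j _ => h.eigenvalues_nonneg j) (Finset.mem_univ k)

lemma vonNeumannEntropy_le_sum_negMulLog_diag (h : M.PosSemidef) :
    vonNeumannEntropy M ≤ (∑ i, Real.negMulLog (M i i).re) / Real.log 2 := by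
  rw [vonNeumannEntropy_eq_sum_negMulLog h.isHermitian]
  exact div_le_div_of_nonneg_right
    (sum_map_eigenvalues_le_sum_map_diag h.isHermitian Real.concaveOn_negMulLog
      h.eigenvalues_nonneg) (Real.log_nonneg one_le_two)

lemma vonNeumannEntropy_eq_neg_logb_of_mul_self_eq_smul (h : M.IsHermitian)
    (htr : M.trace = 1) {r : ℝ} (hM : M * M = (r : ℂ) • M) :
    vonNeumannEntropy M = -Real.logb 2 r := by
  have hterm (k : X) : Real.negMulLog (h.eigenvalues k) = h.eigenvalues k * -Real.log r := by
    rcases eq_or_ne (h.eigenvalues k) 0 with h0 | h0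
    · simp [h0]
    · rw [mul_right_cancel₀ h0 (eigenvalues_sq_of_mul_self_eq_smul h hM k), Real.negMulLog]
      ring
  rw [vonNeumannEntropy_eq_sum_negMulLog h, Finset.sum_congr rfl fun k _ => hterm k,
    ← Finset.sum_mul, sum_eigenvalues_eq_one h htr, one_mul, neg_div, Real.logb]

end VonNeumannEntropy

section Shannon

lemma sum_mul_log_le_sum_mul_log {α : Type*} [Fintype α] {p q : α → ℝ} (hp : ∀ a, 0 ≤ p a)
    (hq : ∀ a, 0 ≤ q a) (hpq : ∀ a, q a = 0 → p a = 0) (hsum : ∑ a, q a ≤ ∑ a, p a) :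
    ∑ a, p a * Real.log (q a) ≤ ∑ a, p a * Real.log (p a) := by
  have hterm (a : α) : p a * Real.log (q a) ≤ p a * Real.log (p a) + (q a - p a) := by
    rcases (hp a).eq_or_lt with h0 | hpos
    · simpa [← h0] using hq a
    · have hqpos : 0 < q a := (hq a).lt_of_ne fun h => hpos.ne' (hpq a h.symm)
      have hlog := Real.log_le_sub_one_of_pos (div_pos hqpos hpos)
      rw [Real.log_div hqpos.ne' hpos.ne'] at hlog
      have := mul_le_mul_of_nonneg_left hlog hpos.le
      rw [mul_sub, mul_sub, mul_div_cancel₀ _ hpos.ne'] at this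
      linarith
  have := Finset.sum_le_sum fun a (_ : a ∈ Finset.univ) => hterm a
  rw [Finset.sum_add_distrib, Finset.sum_sub_distrib] at this
  linarith

lemma sum_negMulLog_le_sum_negMulLog_marginals {α β : Type*} [Fintype α] [Fintype β]
    {p : α × β → ℝ} (hp : ∀ x, 0 ≤ p x) (hsum : ∑ x, p x = 1) :
    ∑ x, Real.negMulLog (p x) ≤
      ∑ a, Real.negMulLog (∑ b, p (a, b)) + ∑ b, Real.negMulLog (∑ a, p (a, b)) := by
  let P (a : α) : ℝ := ∑ b, p (a, b)
  let Q (b : β) : ℝ := ∑ a, p (a, b)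
  have hP (x : α × β) : p x ≤ P x.1 :=
    Finset.single_le_sum (f := fun b => p (x.1, b)) (fun _ _ => hp _) (Finset.mem_univ x.2)
  have hQ (x : α × β) : p x ≤ Q x.2 :=
    Finset.single_le_sum (f := fun a => p (a, x.2)) (fun _ _ => hp _) (Finset.mem_univ x.1)
  have hP1 : ∑ a, P a = 1 := by rw [← hsum, Fintype.sum_prod_type]
  have hQ1 : ∑ b, Q b = 1 := by rw [← hsum, Fintype.sum_prod_type_right]
  have hPQ : ∑ x : α × β, P x.1 * Q x.2 = 1 := by
    rw [Fintype.sum_prod_type, ← Fintype.sum_mul_sum, hP1, hQ1, one_mul]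
  have gibbs : ∑ x, p x * Real.log (P x.1 * Q x.2) ≤ ∑ x, p x * Real.log (p x) := by
    refine sum_mul_log_le_sum_mul_log hp (fun x => ?_) (fun x hx => ?_) (hPQ.trans hsum.symm).le
    · exact mul_nonneg ((hp x).trans (hP x)) ((hp x).trans (hQ x))
    · rcases mul_eq_zero.1 hx with h | h
      · exact le_antisymm (h ▸ hP x) (hp x)
      · exact le_antisymm (h ▸ hQ x) (hp x)
  have hsplit (x : α × β) : p x * Real.log (P x.1 * Q x.2) =
      p x * Real.log (P x.1) + p x * Real.log (Q x.2) := by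
    rcases (hp x).eq_or_lt with h0 | hpos
    · simp [← h0]
    · rw [Real.log_mul (hpos.trans_le (hP x)).ne' (hpos.trans_le (hQ x)).ne', mul_add]
  rw [Finset.sum_congr rfl fun x _ => hsplit x, Finset.sum_add_distrib, Fintype.sum_prod_type,
    Fintype.sum_prod_type_right (fun x : α × β => p x * Real.log (Q x.2))] at gibbs
  simp only [← Finset.sum_mul] at gibbs
  simp only [Real.negMulLog, neg_mul, Finset.sum_neg_distrib]
  linarith

end Shannon

section PartialTrace

open scoped Kronecker

variable {A B R : Type*}

/-- The partial trace `tr_B` of an operator on `A ⊗ B`. -/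
def traceRight [Fintype B] [AddCommMonoid R] (σ : Matrix (A × B) (A × B) R) : Matrix A A R :=
  fun a a' => ∑ b, σ (a, b) (a', b)

/-- The partial trace `tr_A` of an operator on `A ⊗ B`. -/
def traceLeft [Fintype A] [AddCommMonoid R] (σ : Matrix (A × B) (A × B) R) : Matrix B B R :=
  fun b b' => ∑ a, σ (a, b) (a, b')

lemma traceRight_submatrix_swap [Fintype A] [AddCommMonoid R] (σ : Matrix (A × B) (A × B) R) :
    traceRight (σ.submatrix Prod.swap Prod.swap) = traceLeft σ :=
  rfl

lemma trace_traceRight [Fintype A] [Fintype B] [AddCommMonoid R]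
    (σ : Matrix (A × B) (A × B) R) : (traceRight σ).trace = σ.trace := by
  simp only [trace, traceRight, diag_apply, Fintype.sum_prod_type]

lemma traceRight_eq_sum_submatrix [Fintype B] [AddCommMonoid R] (σ : Matrix (A × B) (A × B) R) :
    traceRight σ = ∑ b, σ.submatrix (·, b) (·, b) := by
  ext a a'
  simp only [traceRight, Matrix.sum_apply, submatrix_apply]

lemma posSemidef_traceRight [Fintype B] {𝕜 : Type*} [RCLike 𝕜] {σ : Matrix (A × B) (A × B) 𝕜}
    (h : σ.PosSemidef) : (traceRight σ).PosSemidef := by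
  rw [traceRight_eq_sum_submatrix]
  exact posSemidef_sum _ fun b _ => h.submatrix (·, b)

lemma posSemidef_traceLeft [Fintype A] {𝕜 : Type*} [RCLike 𝕜] {σ : Matrix (A × B) (A × B) 𝕜}
    (h : σ.PosSemidef) : (traceLeft σ).PosSemidef :=
  posSemidef_traceRight (h.submatrix Prod.swap)

variable [Fintype A] [Fintype B] [CommSemiring R] (σ : Matrix (A × B) (A × B) R)

lemma traceRight_kronecker_one_mul_mul_kronecker_one [DecidableEq B] (P Q : Matrix A A R) :
    traceRight ((P ⊗ₖ (1 : Matrix B B R)) * σ * (Q ⊗ₖ (1 : Matrix B B R))) =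
      P * traceRight σ * Q := by
  ext a a'
  simp only [traceRight, mul_apply, kroneckerMap_apply, one_apply, Fintype.sum_prod_type, mul_ite,
    ite_mul, mul_one, mul_zero, zero_mul, Finset.sum_ite_eq, Finset.sum_ite_eq', Finset.mem_univ,
    if_true, Finset.mul_sum, Finset.sum_mul]
  rw [Finset.sum_comm]
  refine Finset.sum_congr rfl fun _ _ => ?_
  rw [Finset.sum_comm]

lemma traceRight_one_kronecker_mul_comm [DecidableEq A] (V : Matrix B B R) :
    traceRight (((1 : Matrix A A R) ⊗ₖ V) * σ) = traceRight (σ * ((1 : Matrix A A R) ⊗ₖ V)) := by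
  ext a a'
  simp only [traceRight, mul_apply, kroneckerMap_apply, one_apply, Fintype.sum_prod_type, mul_ite,
    ite_mul, one_mul, mul_zero, zero_mul, Finset.sum_ite_irrel, Finset.sum_const_zero,
    Finset.sum_ite_eq, Finset.sum_ite_eq', Finset.mem_univ, if_true]
  rw [Finset.sum_comm]
  simp only [mul_comm]

lemma traceRight_kronecker_mul_mul_kronecker [DecidableEq B] (P Q : Matrix A A R)
    {P' Q' : Matrix B B R} (h : Q' * P' = 1) :
    traceRight ((P ⊗ₖ P') * σ * (Q ⊗ₖ Q')) = P * traceRight σ * Q := by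
  classical
  have hP : P ⊗ₖ P' = (P ⊗ₖ (1 : Matrix B B R)) * ((1 : Matrix A A R) ⊗ₖ P') := by
    rw [← mul_kronecker_mul, Matrix.mul_one, Matrix.one_mul]
  have hQ : Q ⊗ₖ Q' = ((1 : Matrix A A R) ⊗ₖ Q') * (Q ⊗ₖ (1 : Matrix B B R)) := by
    rw [← mul_kronecker_mul, Matrix.mul_one, Matrix.one_mul]
  have hcancel : ((1 : Matrix A A R) ⊗ₖ Q') * ((1 : Matrix A A R) ⊗ₖ P') = 1 := by
    rw [← mul_kronecker_mul, h, Matrix.mul_one, one_kronecker_one]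
  calc traceRight ((P ⊗ₖ P') * σ * (Q ⊗ₖ Q'))
      = P * traceRight (((1 : Matrix A A R) ⊗ₖ P') * (σ * ((1 : Matrix A A R) ⊗ₖ Q'))) * Q := by
        rw [← traceRight_kronecker_one_mul_mul_kronecker_one, hP, hQ]
        simp only [Matrix.mul_assoc]
    _ = P * traceRight σ * Q := by
        rw [traceRight_one_kronecker_mul_comm, Matrix.mul_assoc σ, hcancel, Matrix.mul_one]

lemma traceLeft_kronecker_mul_mul_kronecker [DecidableEq A] {P Q : Matrix A A R}
    (P' Q' : Matrix B B R) (h : Q * P = 1) :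
    traceLeft ((P ⊗ₖ P') * σ * (Q ⊗ₖ Q')) = P' * traceLeft σ * Q' := by
  have hswap (S : Matrix A A R) (T : Matrix B B R) :
      (S ⊗ₖ T).submatrix Prod.swap Prod.swap = T ⊗ₖ S := by
    ext x y
    exact mul_comm _ _
  rw [← traceRight_submatrix_swap, submatrix_mul _ _ _ _ _ Prod.swap_bijective,
    submatrix_mul _ _ _ _ _ Prod.swap_bijective, hswap, hswap,
    traceRight_kronecker_mul_mul_kronecker _ _ _ h, traceRight_submatrix_swap]

end PartialTrace

section QuantumInequalities

open scoped Kronecker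

variable {A B : Type} [Fintype A] [Fintype B] [DecidableEq A] [DecidableEq B]
  {σ : Matrix (A × B) (A × B) ℂ}

/- In the eigenbases of the two marginals the diagonal of `σ` is a classical distribution whose
marginals are the spectra, so the claim reduces to Shannon's subadditivity. -/
lemma vonNeumannEntropy_le_traceRight_add_traceLeft (h : σ.PosSemidef) (htr : σ.trace = 1) :
    vonNeumannEntropy σ ≤ vonNeumannEntropy (traceRight σ) + vonNeumannEntropy (traceLeft σ) := by
  have hA := (posSemidef_traceRight h).isHermitian
  have hB := (posSemidef_traceLeft h).isHermitian
  let U : Matrix A A ℂ := hA.eigenvectorUnitary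
  let V : Matrix B B ℂ := hB.eigenvectorUnitary
  have hU : U * Uᴴ = 1 := Unitary.mul_star_self_of_mem hA.eigenvectorUnitary.2
  have hV : V * Vᴴ = 1 := Unitary.mul_star_self_of_mem hB.eigenvectorUnitary.2
  let W := U ⊗ₖ V
  have hW : W * Wᴴ = 1 := by
    rw [conjTranspose_kronecker, ← mul_kronecker_mul, hU, hV, one_kronecker_one]
  let τ := (Uᴴ ⊗ₖ Vᴴ) * σ * (U ⊗ₖ V)
  have hτ_eq : τ = Wᴴ * σ * W := by rw [conjTranspose_kronecker]
  have hτ : τ.PosSemidef := hτ_eq ▸ h.conjTranspose_mul_mul_same W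
  have hτA (a : A) : ∑ b, (τ (a, b) (a, b)).re = hA.eigenvalues a := by
    have := congrFun₂ ((traceRight_kronecker_mul_mul_kronecker σ Uᴴ U hV).trans
      (eigenvectorUnitary_conjTranspose_mul_mul hA)) a a
    simpa [traceRight] using congrArg Complex.re this
  have hτB (b : B) : ∑ a, (τ (a, b) (a, b)).re = hB.eigenvalues b := by
    have := congrFun₂ ((traceLeft_kronecker_mul_mul_kronecker σ Vᴴ V hU).trans
      (eigenvectorUnitary_conjTranspose_mul_mul hB)) b b
    simpa [traceLeft] using congrArg Complex.re this
  have hτ1 : ∑ x, (τ x x).re = 1 := by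
    simp only [Fintype.sum_prod_type, hτA,
      sum_eigenvalues_eq_one hA ((trace_traceRight σ).trans htr)]
  calc vonNeumannEntropy σ = vonNeumannEntropy τ := by
        rw [hτ_eq, vonNeumannEntropy_conjTranspose_mul_mul h.isHermitian hW]
    _ ≤ (∑ x, Real.negMulLog (τ x x).re) / Real.log 2 := vonNeumannEntropy_le_sum_negMulLog_diag hτ
    _ ≤ (∑ a, Real.negMulLog (∑ b, (τ (a, b) (a, b)).re) +
          ∑ b, Real.negMulLog (∑ a, (τ (a, b) (a, b)).re)) / Real.log 2 :=
        div_le_div_of_nonneg_right (sum_negMulLog_le_sum_negMulLog_marginals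
          (p := fun x => (τ x x).re) (fun x => (Complex.nonneg_iff.1 hτ.diag_nonneg).1) hτ1)
          (Real.log_nonneg one_le_two)
    _ = vonNeumannEntropy (traceRight σ) + vonNeumannEntropy (traceLeft σ) := by
        rw [vonNeumannEntropy_eq_sum_negMulLog hA, vonNeumannEntropy_eq_sum_negMulLog hB, add_div]
        simp only [hτA, hτB]

/- Purifying `σ = R Rᴴ` gives a pure state on `A ⊗ B ⊗ (A ⊗ B)` with amplitudes `Y`. Its marginal
`Yᴴ Y` on `B ⊗ (A ⊗ B)` has the entropy of `tr_B σ`, and subadditivity bounds it. -/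
open scoped MatrixOrder in
lemma vonNeumannEntropy_traceRight_le (h : σ.PosSemidef) (htr : σ.trace = 1) :
    vonNeumannEntropy (traceRight σ) ≤ vonNeumannEntropy σ + vonNeumannEntropy (traceLeft σ) := by
  obtain ⟨R, hR⟩ : ∃ R, σ = R * Rᴴ := CStarAlgebra.nonneg_iff_eq_mul_star_self.1 h.nonneg
  let Y : Matrix A (B × A × B) ℂ := .of fun a x => R (a, x.1) x.2
  have hYA : Y * Yᴴ = traceRight σ := by
    ext a a'
    simp only [hR, Y, traceRight, mul_apply, conjTranspose_apply, of_apply, Fintype.sum_prod_type]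
  have hYB : traceRight (Yᴴ * Y) = (traceLeft σ)ᵀ := by
    ext b b'
    simp only [hR, Y, traceRight, traceLeft, mul_apply, conjTranspose_apply, transpose_apply,
      of_apply]
    rw [Finset.sum_comm]
    simp only [mul_comm]
  have hYAB : traceLeft (Yᴴ * Y) = Rᴴ * R := by
    ext x x'
    simp only [Y, traceLeft, mul_apply, conjTranspose_apply, of_apply]
    rw [Fintype.sum_prod_type_right]
  have hY := posSemidef_conjTranspose_mul_self Y
  have hY1 : (Yᴴ * Y).trace = 1 := by rw [trace_mul_comm, hYA, trace_traceRight, htr]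
  calc vonNeumannEntropy (traceRight σ) = vonNeumannEntropy (Yᴴ * Y) := by
        rw [← hYA, vonNeumannEntropy_mul_comm _ _ (isHermitian_mul_conjTranspose_self Y)
          hY.isHermitian]
    _ ≤ vonNeumannEntropy (traceLeft σ)ᵀ + vonNeumannEntropy (Rᴴ * R) :=
        hYB ▸ hYAB ▸ vonNeumannEntropy_le_traceRight_add_traceLeft hY hY1
    _ = vonNeumannEntropy σ + vonNeumannEntropy (traceLeft σ) := by
        rw [vonNeumannEntropy_transpose (posSemidef_traceLeft h).isHermitian, hR,
          vonNeumannEntropy_mul_comm _ _ (isHermitian_conjTranspose_mul_self R)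
            (isHermitian_mul_conjTranspose_self R), add_comm]

end QuantumInequalities

section ReducedState

/-- If `S` is the disjoint union of `I` and `L`, an assignment on `S` is a pair of assignments on
`I` and on `L`. -/
def restrictProdEquiv {ι : Type*} [DecidableEq ι] (α : ι → Type*) {I L S : Finset ι}
    (hIL : Disjoint I L) (hS : I ∪ L = S) :
    (∀ i : S, α i) ≃ (∀ i : I, α i) × ∀ i : L, α i where
  toFun x := (Finset.restrict₂ (hS ▸ Finset.subset_union_left) x,
    Finset.restrict₂ (hS ▸ Finset.subset_union_right) x)
  invFun p i := if h : i.1 ∈ I then p.1 ⟨i, h⟩ else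
    p.2 ⟨i, (Finset.mem_union.1 (hS.symm ▸ i.2)).resolve_left h⟩
  left_inv x := by
    funext i
    by_cases h : i.1 ∈ I <;> simp [h]
  right_inv p := by
    ext i
    · simp
    · simp [Finset.disjoint_right.1 hIL i.2]

lemma restrictProdEquiv_symm_comp_swap {ι : Type*} [DecidableEq ι] (α : ι → Type*)
    {I L S : Finset ι} (hIL : Disjoint I L) (hS : I ∪ L = S) (hS' : L ∪ I = S) :
    (restrictProdEquiv α hIL hS).symm ∘ Prod.swap = (restrictProdEquiv α hIL.symm hS').symm := by
  funext p
  rw [Function.comp_apply, Equiv.symm_apply_eq]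
  exact congrArg Prod.swap ((restrictProdEquiv α hIL.symm hS').apply_symm_apply p).symm

variable {n : ℕ} {d : Fin n → ℕ} {ρ : Matrix (∀ i, Fin (d i)) (∀ i, Fin (d i)) ℂ}

/-- `glueAssignment` as an equivalence: a full assignment is a pair of assignments on `I` and
on `Iᶜ`. -/
def glueEquiv (d : Fin n → ℕ) (I : Finset (Fin n)) :
    ((∀ i : I, Fin (d i)) × ∀ i : (Iᶜ : Finset (Fin n)), Fin (d i)) ≃ ∀ i, Fin (d i) where
  toFun p := glueAssignment I p.1 p.2
  invFun x := (I.restrict x, Iᶜ.restrict x)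
  left_inv p := by
    ext i
    · simp [glueAssignment]
    · simp [glueAssignment, Finset.mem_compl.1 i.2]
  right_inv x := by
    ext i
    simp [glueAssignment]

lemma reducedState_eq_traceRight (ρ : Matrix (∀ i, Fin (d i)) (∀ i, Fin (d i)) ℂ)
    (I : Finset (Fin n)) :
    reducedState ρ I = traceRight (ρ.submatrix (glueEquiv d I) (glueEquiv d I)) :=
  rfl

lemma posSemidef_reducedState (h : ρ.PosSemidef) (I : Finset (Fin n)) :
    (reducedState ρ I).PosSemidef := by
  rw [reducedState_eq_traceRight]
  exact posSemidef_traceRight (h.submatrix (glueEquiv d I))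

lemma trace_reducedState (ρ : Matrix (∀ i, Fin (d i)) (∀ i, Fin (d i)) ℂ) (I : Finset (Fin n)) :
    (reducedState ρ I).trace = ρ.trace := by
  rw [reducedState_eq_traceRight, trace_traceRight]
  exact Equiv.sum_comp (glueEquiv d I) fun x => ρ x x

lemma traceRight_reducedState {I L U : Finset (Fin n)} (hIL : Disjoint I L) (hU : I ∪ L = U) :
    traceRight ((reducedState ρ U).submatrix (restrictProdEquiv (fun i => Fin (d i)) hIL hU).symm
      (restrictProdEquiv (fun i => Fin (d i)) hIL hU).symm) = reducedState ρ I := by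
  have hLU : Disjoint L Uᶜ := disjoint_compl_right.mono_right
    (Finset.compl_subset_compl.2 (hU ▸ Finset.subset_union_right))
  have hI : L ∪ Uᶜ = Iᶜ := by
    rw [← hU, Finset.compl_union, Finset.union_inter_distrib_left, Finset.union_compl,
      Finset.inter_univ, Finset.union_eq_right]
    exact Finset.subset_compl_iff_disjoint_left.2 hIL
  let e := restrictProdEquiv (fun i => Fin (d i)) hIL hU
  let f := restrictProdEquiv (fun i => Fin (d i)) hLU hI
  have hglue (a : ∀ i : I, Fin (d i)) (p) :
      glueAssignment U (e.symm (a, p.1)) p.2 = glueAssignment I a (f.symm p) := by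
    ext i
    have hmem : i ∈ U ↔ i ∈ I ∨ i ∈ L := by rw [← hU, Finset.mem_union]
    by_cases hiI : i ∈ I <;> by_cases hiL : i ∈ L <;>
      simp [glueAssignment, e, f, restrictProdEquiv, hmem, hiI, hiL]
  ext a a'
  simp only [traceRight, submatrix_apply, reducedState]
  rw [← Fintype.sum_prod_type']
  exact Fintype.sum_equiv f.symm _ _ fun p => by rw [hglue, hglue]

lemma traceLeft_reducedState {I L U : Finset (Fin n)} (hIL : Disjoint I L) (hU : I ∪ L = U) :
    traceLeft ((reducedState ρ U).submatrix (restrictProdEquiv (fun i => Fin (d i)) hIL hU).symm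
      (restrictProdEquiv (fun i => Fin (d i)) hIL hU).symm) = reducedState ρ L := by
  have hUcomm : L ∪ I = U := by rw [Finset.union_comm, hU]
  rw [← traceRight_submatrix_swap, ← traceRight_reducedState hIL.symm hUcomm, submatrix_submatrix,
    restrictProdEquiv_symm_comp_swap]

end ReducedState

section EntropyRegion

variable {n : ℕ} {v : Finset (Fin n) → ℝ}

lemma nonneg_of_mem_quantumEntropyRegion (hv : v ∈ quantumEntropyRegion n) (I : Finset (Fin n)) :
    0 ≤ v I := by
  obtain ⟨d, -, ρ, hρ, htr, rfl⟩ := hv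
  exact vonNeumannEntropy_nonneg (posSemidef_reducedState hρ I) ((trace_reducedState ρ I).trans htr)

lemma le_union_add_of_mem_quantumEntropyRegion (hv : v ∈ quantumEntropyRegion n)
    {J K : Finset (Fin n)} (hJK : Disjoint J K) : v J ≤ v (J ∪ K) + v K := by
  obtain ⟨d, -, ρ, hρ, htr, rfl⟩ := hv
  let e := (restrictProdEquiv (fun i => Fin (d i)) hJK rfl).symm
  have hσ := posSemidef_reducedState hρ (J ∪ K)
  have hσ1 : ((reducedState ρ (J ∪ K)).submatrix e e).trace = 1 := by
    rw [← htr, ← trace_reducedState ρ (J ∪ K)]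
    exact Equiv.sum_comp e fun x => reducedState ρ (J ∪ K) x x
  have h := vonNeumannEntropy_traceRight_le (hσ.submatrix e) hσ1
  rwa [traceRight_reducedState, traceLeft_reducedState,
    vonNeumannEntropy_submatrix_equiv hσ.isHermitian] at h

end EntropyRegion

section SuperpositionState

variable {Ω X E : Type} [Fintype Ω] [DecidableEq X] [DecidableEq E]

/-- The matrix `∑ ω, |φ ω⟩⟨η ω|`: the amplitudes of the unnormalised uniform superposition
`∑ ω, |φ ω⟩|η ω⟩` of a system `X` and an environment `E`. -/
def amplitudeMatrix (φ : Ω → X) (η : Ω → E) : Matrix X E ℂ :=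
  (1 : Matrix X X ℂ).submatrix id φ * (1 : Matrix E E ℂ).submatrix η id

/-- The reduced state on the system `X` of the uniform superposition of the vectors
`|φ ω⟩|η ω⟩`. For injective `η` it is the classical distribution of `φ` under the uniform measure
on `Ω`, for constant `η` it is pure. -/
noncomputable def superpositionState [Fintype E] (φ : Ω → X) (η : Ω → E) : Matrix X X ℂ :=
  (Fintype.card Ω : ℂ)⁻¹ • (amplitudeMatrix φ η * (amplitudeMatrix φ η)ᴴ)

lemma conjTranspose_amplitudeMatrix (φ : Ω → X) (η : Ω → E) :
    (amplitudeMatrix φ η)ᴴ = amplitudeMatrix η φ := by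
  simp only [amplitudeMatrix, conjTranspose_mul, conjTranspose_submatrix, conjTranspose_one]

lemma amplitudeMatrix_mul_conjTranspose [Fintype E] (φ : Ω → X) (η : Ω → E) :
    amplitudeMatrix φ η * (amplitudeMatrix φ η)ᴴ =
      (1 : Matrix X X ℂ).submatrix id φ * (1 : Matrix E E ℂ).submatrix η η *
        (1 : Matrix X X ℂ).submatrix φ id := by
  have h : (1 : Matrix E E ℂ).submatrix η id * (1 : Matrix E E ℂ).submatrix id η =
      (1 : Matrix E E ℂ).submatrix η η := by
    rw [← submatrix_mul _ _ _ _ _ Function.bijective_id, Matrix.one_mul]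
  rw [conjTranspose_amplitudeMatrix, amplitudeMatrix, amplitudeMatrix, ← h]
  simp only [Matrix.mul_assoc]

variable [Fintype E] (φ : Ω → X) (η : Ω → E)

lemma superpositionState_apply (x x' : X) :
    superpositionState φ η x x' = (Fintype.card Ω : ℂ)⁻¹ *
      ∑ ω, ∑ ω', if φ ω = x ∧ φ ω' = x' ∧ η ω' = η ω then 1 else 0 := by
  rw [superpositionState, amplitudeMatrix_mul_conjTranspose, Matrix.smul_apply, smul_eq_mul]
  congr 1
  simp only [mul_apply, submatrix_apply, one_apply, id, Finset.sum_mul]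
  rw [Finset.sum_comm]
  refine Finset.sum_congr rfl fun ω _ => Finset.sum_congr rfl fun ω' _ => ?_
  simp only [← ite_and, mul_ite, mul_one, mul_zero, eq_comm]
  congr 1
  simp only [eq_iff_iff]
  tauto

lemma superpositionState_eq_of_injective [DecidableEq Ω] {η : Ω → E} (hη : Function.Injective η) :
    superpositionState φ η = superpositionState φ id := by
  ext x x'
  simp only [superpositionState_apply, hη.eq_iff, id]

lemma posSemidef_superpositionState [Finite X] : (superpositionState φ η).PosSemidef :=
  (posSemidef_self_mul_conjTranspose _).smul (inv_nonneg.2 (Nat.cast_nonneg _))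

variable [Fintype X]

lemma trace_superpositionState [Nonempty Ω] {φ : Ω → X} {η : Ω → E}
    (h : Function.Injective fun ω => (φ ω, η ω)) : (superpositionState φ η).trace = 1 := by
  classical
  have hiff (ω ω' : Ω) : φ ω' = φ ω ∧ η ω' = η ω ↔ ω = ω' :=
    ⟨fun h' => (h (Prod.ext h'.1 h'.2)).symm, by rintro rfl; simp⟩
  have hterm (ω ω' : Ω) : ∑ x, (if φ ω = x ∧ φ ω' = x ∧ η ω' = η ω then (1 : ℂ) else 0) =
      if ω = ω' then 1 else 0 := by
    simp only [ite_and, Finset.sum_ite_eq, Finset.mem_univ, if_true, ← hiff]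
  calc (superpositionState φ η).trace
      = (Fintype.card Ω : ℂ)⁻¹ * ∑ ω, ∑ ω',
          ∑ x, if φ ω = x ∧ φ ω' = x ∧ η ω' = η ω then 1 else 0 := by
        simp only [trace, diag_apply, superpositionState_apply, ← Finset.mul_sum]
        rw [Finset.sum_comm]
        exact congrArg _ (Finset.sum_congr rfl fun _ _ => Finset.sum_comm)
    _ = 1 := by simp [hterm]

lemma vonNeumannEntropy_superpositionState_comm :
    vonNeumannEntropy (superpositionState φ η) = vonNeumannEntropy (superpositionState η φ) := by
  have hφη : superpositionState φ η =
      ((Fintype.card Ω : ℂ)⁻¹ • amplitudeMatrix φ η) * amplitudeMatrix η φ := by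
    rw [superpositionState, conjTranspose_amplitudeMatrix, Matrix.smul_mul]
  have hηφ : superpositionState η φ =
      amplitudeMatrix η φ * ((Fintype.card Ω : ℂ)⁻¹ • amplitudeMatrix φ η) := by
    rw [superpositionState, conjTranspose_amplitudeMatrix, Matrix.mul_smul]
  rw [hφη, hηφ, vonNeumannEntropy_mul_comm]
  · exact hφη ▸ (posSemidef_superpositionState φ η).isHermitian
  · exact hηφ ▸ (posSemidef_superpositionState η φ).isHermitian

lemma superpositionState_id_apply [DecidableEq Ω] (ω ω' : Ω) :
    superpositionState id φ ω ω' = if φ ω' = φ ω then (Fintype.card Ω : ℂ)⁻¹ else 0 := by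
  simp [superpositionState_apply, ite_and, Finset.sum_ite_irrel]

lemma vonNeumannEntropy_superpositionState_of_injective [Nonempty Ω] {η : Ω → E}
    (hη : Function.Injective η) {k : ℕ}
    (hφ : ∀ ω, Finset.card {ω' | φ ω' = φ ω} * 2 ^ k = Fintype.card Ω) :
    vonNeumannEntropy (superpositionState φ η) = k := by
  classical
  let M := superpositionState id φ
  have hM : M.PosSemidef := posSemidef_superpositionState id φ
  have hM1 : M.trace = 1 := trace_superpositionState fun ω ω' h => congrArg Prod.fst h
  have hMM : M * M = (((2 ^ k)⁻¹ : ℝ) : ℂ) • M := by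
    ext ω ω'
    have hfibre : (Finset.card {ω'' | φ ω'' = φ ω} : ℂ) * (Fintype.card Ω : ℂ)⁻¹ = (2 ^ k)⁻¹ := by
      have h : (Finset.card {ω'' | φ ω'' = φ ω} : ℂ) * 2 ^ k = Fintype.card Ω := by
        exact_mod_cast hφ ω
      refine eq_inv_of_mul_eq_one_left ?_
      rw [mul_right_comm, h, mul_inv_cancel₀ (Nat.cast_ne_zero.2 Fintype.card_ne_zero)]
    have hterm (ω'' : Ω) : M ω ω'' * M ω'' ω' =
        if φ ω'' = φ ω then (Fintype.card Ω : ℂ)⁻¹ * M ω ω' else 0 := by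
      rcases eq_or_ne (φ ω'') (φ ω) with h | h
      · simp [M, superpositionState_id_apply, h]
      · simp [M, superpositionState_id_apply, h]
    simp only [mul_apply, hterm, Matrix.smul_apply, smul_eq_mul, ← Finset.sum_filter,
      Finset.sum_const, nsmul_eq_mul]
    rw [← mul_assoc, hfibre]
    push_cast
    rfl
  rw [superpositionState_eq_of_injective φ hη, vonNeumannEntropy_superpositionState_comm,
    vonNeumannEntropy_eq_neg_logb_of_mul_self_eq_smul hM.isHermitian hM1 hMM,
    Real.logb_inv, neg_neg, Real.logb_pow, Real.logb_self_eq_one one_lt_two, mul_one]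

end SuperpositionState

section RegisterState

variable {Ω E : Type} [Fintype Ω] [Fintype E] [DecidableEq E] {m n : ℕ}

lemma reducedState_superpositionState {d : Fin n → ℕ} (φ : Ω → ∀ i, Fin (d i)) (η : Ω → E)
    (I : Finset (Fin n)) :
    reducedState (superpositionState φ η) I =
      superpositionState (fun ω => I.restrict (φ ω)) fun ω => (Iᶜ.restrict (φ ω), η ω) := by
  have hglue (ω a c) : φ ω = glueAssignment I a c ↔
      I.restrict (φ ω) = a ∧ Iᶜ.restrict (φ ω) = c :=
    ((glueEquiv d I).symm_apply_eq (y := (a, c))).symm.trans Prod.ext_iff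
  ext a b
  have hterm (ω ω') : ∑ c, (if φ ω = glueAssignment I a c ∧ φ ω' = glueAssignment I b c ∧
      η ω' = η ω then (1 : ℂ) else 0) = if I.restrict (φ ω) = a ∧ I.restrict (φ ω') = b ∧
        (Iᶜ.restrict (φ ω'), η ω') = (Iᶜ.restrict (φ ω), η ω) then 1 else 0 := by
    simp only [hglue, Prod.mk.injEq, ite_and, Finset.sum_ite_irrel, Finset.sum_const_zero,
      Finset.sum_ite_eq, Finset.mem_univ, if_true]
  simp only [reducedState, superpositionState_apply, ← Finset.mul_sum, ← hterm]
  rw [Finset.sum_comm]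
  exact congrArg _ (Finset.sum_congr rfl fun _ _ => Finset.sum_comm)

variable {q : ℕ} [NeZero q] (e : Fin m ↪ Fin n) (w : Ω → Fin m → Fin q) (η : Ω → E)

/-- The state of `n` parties in which, in uniform superposition over `ω`, the party `e j` holds
`w ω j`, the environment holds `η ω`, and the parties outside the range of `e` hold `0`. -/
noncomputable def registerState : Matrix (Fin n → Fin q) (Fin n → Fin q) ℂ :=
  superpositionState (fun ω => Function.extend e (w ω) 0) η

lemma restrict_extend_eq_iff (f g : Fin m → Fin q) (I : Finset (Fin n)) :
    I.restrict (Function.extend e f 0) = I.restrict (Function.extend e g 0) ↔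
      ∀ j, e j ∈ I → f j = g j := by
  refine ⟨fun h j hj => ?_, fun h => funext fun i => ?_⟩
  · simpa [e.injective.extend_apply] using congrFun h ⟨e j, hj⟩
  · obtain ⟨i, hi⟩ := i
    by_cases hij : ∃ j, e j = i
    · obtain ⟨j, rfl⟩ := hij
      simpa [e.injective.extend_apply] using h j hi
    · simp [Function.extend_apply' _ _ _ hij]

variable [Nonempty Ω]

variable {w η} in
lemma qEntropyVector_registerState_eq {I : Finset (Fin n)} {k : ℕ}
    (hinj : ∀ ω ω', (∀ j, e j ∉ I → w ω j = w ω' j) → η ω = η ω' → ω = ω')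
    (hcard : ∀ ω, Finset.card {ω' | ∀ j, e j ∈ I → w ω' j = w ω j} * 2 ^ k = Fintype.card Ω) :
    qEntropyVector (registerState e w η) I = k := by
  rw [qEntropyVector, registerState, reducedState_superpositionState]
  refine vonNeumannEntropy_superpositionState_of_injective _ (fun ω ω' h => ?_) fun ω => ?_
  · rw [Prod.mk.injEq, restrict_extend_eq_iff] at h
    exact hinj ω ω' (fun j hj => h.1 j (Finset.mem_compl.2 hj)) h.2
  · simpa only [restrict_extend_eq_iff] using hcard ω

lemma qEntropyVector_registerState_eq_of_compl {I : Finset (Fin n)} {k : ℕ}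
    (hinj : ∀ ω ω', (∀ j, e j ∈ I → w ω j = w ω' j) → ω = ω')
    (hcard : ∀ ω, Finset.card {ω' | (∀ j, e j ∉ I → w ω' j = w ω j) ∧ η ω' = η ω} * 2 ^ k =
      Fintype.card Ω) :
    qEntropyVector (registerState e w η) I = k := by
  rw [qEntropyVector, registerState, reducedState_superpositionState,
    vonNeumannEntropy_superpositionState_comm]
  refine vonNeumannEntropy_superpositionState_of_injective _ (fun ω ω' h => ?_) fun ω => ?_
  · exact hinj ω ω' ((restrict_extend_eq_iff e _ _ I).1 h)
  · simpa only [Prod.mk.injEq, restrict_extend_eq_iff, Finset.mem_compl] using hcard ω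

lemma qEntropyVector_registerState_mem_quantumEntropyRegion
    (h : Function.Injective fun ω => (w ω, η ω)) :
    qEntropyVector (registerState e w η) ∈ quantumEntropyRegion n := by
  refine ⟨fun _ => q, fun _ => NeZero.one_le, _, posSemidef_superpositionState _ η,
    trace_superpositionState fun ω ω' hω => h ?_, rfl⟩
  rw [Prod.mk.injEq] at hω
  exact Prod.ext (Function.extend_injective e.injective 0 hω.1) hω.2

end RegisterState

section ThreePartyStates

variable {m n : ℕ}

/-- The entropy vector on `n` parties whose parties `e j` carry the entropies of `g` and whose
other parties are trivial. -/
def extendParties (e : Fin m ↪ Fin n) (g : Finset (Fin m) → ℝ) : Finset (Fin n) → ℝ :=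
  fun I => g {j | e j ∈ I}

lemma extendParties_map (e : Fin m ↪ Fin n) (g : Finset (Fin m) → ℝ) (J : Finset (Fin m)) :
    extendParties e g (J.map e) = g J := by
  simp [extendParties]

/-- The entropies of three bits that are uniform subject to having sum zero. -/
def xorEntropy (J : Finset (Fin 3)) : ℝ := ((min J.card 2 : ℕ) : ℝ)

/-- The entropies of a uniform classical bit known to three parties. -/
def sharedBitEntropy (J : Finset (Fin 3)) : ℝ := ((min J.card 1 : ℕ) : ℝ)

/-- The entropies of the pure state `(|000⟩ + |111⟩)/√2`. -/
def ghzEntropy (J : Finset (Fin 3)) : ℝ := if J = Finset.univ then 0 else sharedBitEntropy J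

lemma xorEntropy_add_sharedBitEntropy (J : Finset (Fin 3)) :
    xorEntropy J + sharedBitEntropy J = ghzEntropy J + J.card := by
  rcases eq_or_ne J Finset.univ with rfl | hJ
  · norm_num [xorEntropy, sharedBitEntropy, ghzEntropy]
  · have hcard : min J.card 2 = J.card :=
      min_eq_left (Nat.le_of_lt_succ (Finset.card_lt_card (Finset.ssubset_univ_iff.2 hJ)))
    rw [xorEntropy, ghzEntropy, if_neg hJ, hcard, add_comm]

variable (e : Fin 3 ↪ Fin n)

lemma extendParties_xorEntropy_mem_quantumEntropyRegion :
    extendParties e xorEntropy ∈ quantumEntropyRegion n := by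
  let w : Fin 2 × Fin 2 → Fin 3 → Fin 2 := fun ω => ![ω.1, ω.2, ω.1 + ω.2]
  have hcard : ∀ (J : Finset (Fin 3)) (ω),
      Finset.card {ω' | ∀ j, j ∈ J → w ω' j = w ω j} * 2 ^ min J.card 2 =
        Fintype.card (Fin 2 × Fin 2) := by
    decide
  have h : qEntropyVector (registerState e w id) = extendParties e xorEntropy := by
    funext I
    refine qEntropyVector_registerState_eq e (fun _ _ _ => id) fun ω => ?_
    simpa using hcard {j | e j ∈ I} ω
  exact h ▸ qEntropyVector_registerState_mem_quantumEntropyRegion e w id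
    fun _ _ h => congrArg Prod.snd h

lemma card_const_fibre_mul_two_pow : ∀ (J : Finset (Fin 3)) (b : Fin 2),
    Finset.card {b' : Fin 2 | ∀ j, j ∈ J → b' = b} * 2 ^ min J.card 1 = Fintype.card (Fin 2) := by
  decide

lemma extendParties_sharedBitEntropy_mem_quantumEntropyRegion :
    extendParties e sharedBitEntropy ∈ quantumEntropyRegion n := by
  have h : qEntropyVector (registerState e (fun (b : Fin 2) _ => b) id) =
      extendParties e sharedBitEntropy := by
    funext I
    refine qEntropyVector_registerState_eq e (fun _ _ _ => id) fun b => ?_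
    simpa using card_const_fibre_mul_two_pow {j | e j ∈ I} b
  exact h ▸ qEntropyVector_registerState_mem_quantumEntropyRegion e _ id
    fun _ _ h => congrArg Prod.snd h

lemma extendParties_ghzEntropy_mem_quantumEntropyRegion :
    extendParties e ghzEntropy ∈ quantumEntropyRegion n := by
  have h : qEntropyVector (registerState e (fun (b : Fin 2) _ => b) fun _ => ()) =
      extendParties e ghzEntropy := by
    funext I
    by_cases hI : ∀ j, e j ∈ I
    · have hghz : extendParties e ghzEntropy I = (0 : ℕ) := by simp [extendParties, ghzEntropy, hI]
      rw [hghz]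
      refine qEntropyVector_registerState_eq_of_compl e _ _ (fun b b' h => h 0 (hI 0)) fun b => ?_
      simp [hI]
    · have hghz : extendParties e ghzEntropy I =
          (min (Finset.card {j | e j ∈ I}) 1 : ℕ) := by
        simp [extendParties, ghzEntropy, sharedBitEntropy, hI, Finset.filter_eq_self]
      rw [hghz]
      obtain ⟨j, hj⟩ := not_forall.1 hI
      refine qEntropyVector_registerState_eq e (fun b b' h _ => h j hj) fun b => ?_
      simpa using card_const_fibre_mul_two_pow {j | e j ∈ I} b
  exact h ▸ qEntropyVector_registerState_mem_quantumEntropyRegion e _ _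
    fun b b' h => congrFun (congrArg Prod.fst h) 0

end ThreePartyStates

section DualCone

variable {n : ℕ}

lemma entPairing_eq_dotProduct (f v : Finset (Fin n) → ℝ) : entPairing f v = f ⬝ᵥ v :=
  rfl

lemma dualCone_closure (K : Set (Finset (Fin n) → ℝ)) : dualCone (closure K) = dualCone K := by
  refine Set.Subset.antisymm (fun f hf v hv => hf v (subset_closure hv)) fun f hf => ?_
  have hclosed : IsClosed {v | 0 ≤ entPairing f v} :=
    isClosed_le continuous_const (continuous_const.dotProduct continuous_id)
  exact closure_minimal hf hclosed

/-- The family of indicators `I ↦ [i ∈ I]`, whose orthogonal complement is the balanced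
subspace. -/
def membershipVector (i : Fin n) : Finset (Fin n) → ℝ := fun I => if i ∈ I then 1 else 0

lemma dotProduct_membershipVector (f : Finset (Fin n) → ℝ) (i : Fin n) :
    f ⬝ᵥ membershipVector i = ∑ I with i ∈ I, f I := by
  simp only [dotProduct, membershipVector, mul_ite, mul_one, mul_zero, Finset.sum_filter]

lemma mem_balancedSubspace_iff {f : Finset (Fin n) → ℝ} :
    f ∈ balancedSubspace n ↔ ∀ i, f ⬝ᵥ membershipVector i = 0 := by
  simp only [dotProduct_membershipVector]
  rfl

lemma sub_mem_of_eq_inter_add {𝕜 V : Type*} [Ring 𝕜] [AddCommGroup V] [Module 𝕜 V]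
    {B : Submodule 𝕜 V} {C D : Set V} (hCB : Submodule.span 𝕜 C ⊓ B = ⊥)
    (hD : D = (D ∩ B) + C) {f g : V} (hf : f ∈ D) (hg : g ∈ Submodule.span 𝕜 C)
    (hfg : f - g ∈ B) : f - g ∈ D := by
  rw [hD] at hf
  obtain ⟨b, hb, c, hc, rfl⟩ := hf
  have hcg : c - g = 0 := by
    rw [← Submodule.mem_bot 𝕜, ← hCB]
    refine ⟨sub_mem (Submodule.subset_span hc) hg, ?_⟩
    simpa [add_sub_assoc] using B.sub_mem hfg hb.2
  obtain rfl := sub_eq_zero.1 hcg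
  simpa using hb.1

/-- A family of inequalities valid on `K` that is dual to the membership vectors and such that
every inequality valid on `K` stays valid after its combination of the family with the same
membership sums is subtracted, which makes it balanced. -/
structure IsBalancingFamily (K : Set (Finset (Fin n) → ℝ)) (c : Fin n → Finset (Fin n) → ℝ) :
    Prop where
  mem_dualCone : ∀ i, c i ∈ dualCone K
  dotProduct_membershipVector : ∀ i j, c i ⬝ᵥ membershipVector j = if i = j then 1 else 0
  sub_mem_dualCone : ∀ f ∈ dualCone K,
    f - ∑ i, (f ⬝ᵥ membershipVector i) • c i ∈ dualCone K

lemma IsBalancingFamily.sum_mul_dotProduct_le {K : Set (Finset (Fin n) → ℝ)}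
    {c : Fin n → Finset (Fin n) → ℝ} (hc : IsBalancingFamily K c) {f v : Finset (Fin n) → ℝ}
    (hf : f ∈ dualCone K) (hv : v ∈ K) :
    ∑ i, f ⬝ᵥ membershipVector i * (c i ⬝ᵥ v) ≤ f ⬝ᵥ v := by
  have h := hc.sub_mem_dualCone f hf v hv
  rw [entPairing_eq_dotProduct, sub_dotProduct, sum_dotProduct, sub_nonneg] at h
  simpa only [smul_dotProduct, smul_eq_mul] using h

lemma exists_isBalancingFamily_of_dualCone_eq_inter_add {C K : Set (Finset (Fin n) → ℝ)}
    (hCB : Submodule.span ℝ C ⊓ balancedSubspace n = ⊥)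
    (hK : dualCone K = (dualCone K ∩ balancedSubspace n) + C)
    (hsingle : ∀ i, Pi.single {i} 1 ∈ dualCone K) : ∃ c, IsBalancingFamily K c := by
  have hCK : C ⊆ dualCone K := by
    conv_rhs => rw [hK]
    exact Set.subset_add_right _ ⟨fun v _ => (zero_dotProduct v).ge, zero_mem _⟩
  have hdecomp (i : Fin n) : ∃ c ∈ C, Pi.single {i} 1 - c ∈ balancedSubspace n := by
    have h := hsingle i
    rw [hK] at h
    obtain ⟨b, hb, c, hc, hbc⟩ := h
    exact ⟨c, hc, by simpa [← hbc] using hb.2⟩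
  choose c hcC hcB using hdecomp
  have hdual (i j : Fin n) : c i ⬝ᵥ membershipVector j = if i = j then 1 else 0 := by
    have h := mem_balancedSubspace_iff.1 (hcB i) j
    rw [sub_dotProduct, single_one_dotProduct, sub_eq_zero] at h
    simp [← h, membershipVector, eq_comm]
  refine ⟨c, fun i => hCK (hcC i), hdual, fun f hf => sub_mem_of_eq_inter_add hCB hK hf
    (sum_mem fun i _ => Submodule.smul_mem _ _ (Submodule.subset_span (hcC i))) ?_⟩
  exact mem_balancedSubspace_iff.2 fun j => by simp [sub_dotProduct, sum_dotProduct, hdual]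

end DualCone

section ValidInequalities

variable {n : ℕ}

lemma single_mem_dualCone_quantumEntropyRegion (I : Finset (Fin n)) :
    Pi.single I 1 ∈ dualCone (quantumEntropyRegion n) := fun v hv => by
  rw [entPairing_eq_dotProduct, single_one_dotProduct]
  exact nonneg_of_mem_quantumEntropyRegion hv I

lemma add_sub_mem_dualCone_quantumEntropyRegion {J K : Finset (Fin n)} (hJK : Disjoint J K) :
    Pi.single (J ∪ K) 1 + Pi.single K 1 - Pi.single J 1 ∈ dualCone (quantumEntropyRegion n) :=
  fun v hv => by
    rw [entPairing_eq_dotProduct, sub_dotProduct, add_dotProduct, single_one_dotProduct,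
      single_one_dotProduct, single_one_dotProduct, sub_nonneg]
    exact le_union_add_of_mem_quantumEntropyRegion hv hJK

end ValidInequalities

namespace IsBalancingFamily

variable {n : ℕ} {c : Fin n → Finset (Fin n) → ℝ}
  (hc : IsBalancingFamily (quantumEntropyRegion n) c)

include hc

lemma sum_dotProduct_le_apply {v : Finset (Fin n) → ℝ} (hv : v ∈ quantumEntropyRegion n)
    (I : Finset (Fin n)) : ∑ i ∈ I, c i ⬝ᵥ v ≤ v I := by
  have h := hc.sum_mul_dotProduct_le (single_mem_dualCone_quantumEntropyRegion I) hv
  simpa [membershipVector] using h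

lemma two_mul_sum_dotProduct_le {v : Finset (Fin n) → ℝ}
    (hv : v ∈ quantumEntropyRegion n) {J K : Finset (Fin n)} (hJK : Disjoint J K) :
    2 * ∑ i ∈ K, c i ⬝ᵥ v ≤ v (J ∪ K) + v K - v J := by
  have h := hc.sum_mul_dotProduct_le (add_sub_mem_dualCone_quantumEntropyRegion hJK) hv
  have hcoeff (i : Fin n) : (Pi.single (J ∪ K) 1 + Pi.single K 1 - Pi.single J 1) ⬝ᵥ
      membershipVector i = if i ∈ K then (2 : ℝ) else 0 := by
    have hJ : i ∈ J → i ∉ K := fun hi => Finset.disjoint_left.1 hJK hi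
    by_cases hiK : i ∈ K <;> by_cases hiJ : i ∈ J <;>
      simp_all [membershipVector, sub_dotProduct, add_dotProduct, one_add_one_eq_two]
  simpa [hcoeff, sub_dotProduct, add_dotProduct, Finset.mul_sum] using h

variable (e : Fin 3 ↪ Fin n)

lemma sum_dotProduct_xorEntropy_le : ∑ j, c (e j) ⬝ᵥ extendParties e xorEntropy ≤ 2 := by
  have h := hc.sum_dotProduct_le_apply (extendParties_xorEntropy_mem_quantumEntropyRegion e)
    (Finset.univ.map e)
  simpa [Finset.sum_map, extendParties_map, xorEntropy] using h

lemma sum_dotProduct_sharedBitEntropy_le :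
    ∑ j, c (e j) ⬝ᵥ extendParties e sharedBitEntropy ≤ 3 / 4 := by
  let g : Fin 3 → ℝ := fun j => c (e j) ⬝ᵥ extendParties e sharedBitEntropy
  have hpair (i j k : Fin 3) (hij : i ≠ j) (hik : i ≠ k) (hjk : j ≠ k) : 2 * (g j + g k) ≤ 1 := by
    have hdisj : Disjoint ({i} : Finset (Fin 3)) {j, k} := by simp [hij, hik]
    have h := hc.two_mul_sum_dotProduct_le
      (extendParties_sharedBitEntropy_mem_quantumEntropyRegion e)
      ((Finset.disjoint_map e).2 hdisj)
    rw [← Finset.map_union, extendParties_map, extendParties_map, extendParties_map,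
      Finset.sum_map, Finset.sum_pair hjk] at h
    simpa [sharedBitEntropy, Finset.card_pair hjk, hij, hik] using h
  have h12 := hpair 0 1 2 (by decide) (by decide) (by decide)
  have h02 := hpair 1 0 2 (by decide) (by decide) (by decide)
  have h01 := hpair 2 0 1 (by decide) (by decide) (by decide)
  rw [Fin.sum_univ_three]
  change g 0 + g 1 + g 2 ≤ 3 / 4
  linarith

lemma sum_dotProduct_xorEntropy_add_sharedBitEntropy :
    ∑ j, c (e j) ⬝ᵥ extendParties e xorEntropy + ∑ j, c (e j) ⬝ᵥ extendParties e sharedBitEntropy =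
      ∑ j, c (e j) ⬝ᵥ extendParties e ghzEntropy + 3 := by
  have hvec : extendParties e xorEntropy + extendParties e sharedBitEntropy =
      extendParties e ghzEntropy + ∑ j, membershipVector (e j) := by
    funext I
    simpa [extendParties, membershipVector, Finset.sum_apply] using
      xorEntropy_add_sharedBitEntropy {j | e j ∈ I}
  simp only [← Finset.sum_add_distrib, ← dotProduct_add, hvec]
  simp [dotProduct_add, dotProduct_sum, hc.dotProduct_membershipVector, Finset.sum_add_distrib]

end IsBalancingFamily

/-- For `n ≥ 3`, the dual cone `Γ_n*` of valid quantum information inequalities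
is not the (direct) sum of its balanced part and another cone whose span meets
the balanced subspace trivially. -/
theorem quantum_dual_cone_no_direct_sum (n : ℕ) (hn : 3 ≤ n) :
    ¬ ∃ C : Set (Finset (Fin n) → ℝ),
        Convex ℝ C ∧ (∀ v ∈ C, ∀ t : ℝ, 0 < t → t • v ∈ C) ∧
        Submodule.span ℝ C ⊓ balancedSubspace n = ⊥ ∧
        dualCone (closure (quantumEntropyRegion n)) =
          (dualCone (closure (quantumEntropyRegion n)) ∩
            (balancedSubspace n : Set (Finset (Fin n) → ℝ))) + C := by
  rintro ⟨C, -, -, hCB, hC⟩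
  rw [dualCone_closure] at hC
  obtain ⟨c, hc⟩ := exists_isBalancingFamily_of_dualCone_eq_inter_add hCB hC
    fun i => single_mem_dualCone_quantumEntropyRegion {i}
  let e : Fin 3 ↪ Fin n := Fin.castLEEmb hn
  have hxor := hc.sum_dotProduct_xorEntropy_le e
  have hbit := hc.sum_dotProduct_sharedBitEntropy_le e
  have hghz : 0 ≤ ∑ j, c (e j) ⬝ᵥ extendParties e ghzEntropy := Finset.sum_nonneg fun j _ =>
    hc.mem_dualCone (e j) _ (extendParties_ghzEntropy_mem_quantumEntropyRegion e)
  have hsum := hc.sum_dotProduct_xorEntropy_add_sharedBitEntropy e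
  linarith
end

section
/- Let F be a finite field, V a finite-dimensional vector space over F, n ∈ ℕ, and U : Fin n → Subspace F V a collection of subspaces. Let X be uniformly distributed on the dual space Module.Dual F V and define X_i = X|_{U_i}, the restriction of the random functional to U_i. Then for every I : Finset (Fin n), the base-2 Shannon entropy of the joint random variable (X_i)_{i∈I} — i.e., of the pushforward of the uniform pmf on Module.Dual F V under the map φ ↦ (φ|_{U_i})_{i∈I} — equals Module.finrank F (⨆_{i∈I} U i) · log₂ (Fintype.card F). Hence the entropy vector of X equals log₂|F| times the rank vector of the subspace collection. -/
/-- Base-2 Shannon entropy of a probability mass function (on a finite type this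
is the finite sum `-∑ x, q x * log₂ (q x)`, with `0 * log₂ 0 = 0`). -/
noncomputable def shannonEntropy {X : Type} (q : PMF X) : ℝ :=
  -∑' x, (q x).toReal * Real.logb 2 ((q x).toReal)

/-! Let `W` be the sum of the subspaces. The joint restriction `φ ↦ (φ|_{U i})ᵢ` factors through
`φ ↦ φ|_W`, which is a surjective homomorphism and so carries the uniform distribution to the
uniform distribution on the dual of `W`. The second factor `ψ ↦ (ψ|_{U i})ᵢ` is injective and so
preserves entropy. What remains is the entropy of a uniform element of a space with `|F| ^ dim W`
elements. -/

open Function LinearMap PMF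
open scoped ENNReal

lemma eq_uniformOfFintype_of_forall_apply_eq {α : Type*} [Fintype α] [Nonempty α] {p : PMF α}
    (hp : ∀ a b, p a = p b) : p = uniformOfFintype α := by
  ext a
  have card_mul_apply : (Fintype.card α : ℝ≥0∞) * p a = 1 := calc
    (Fintype.card α : ℝ≥0∞) * p a = ∑ b, p b := by
      simp only [fun b ↦ hp b a, Finset.sum_const, Finset.card_univ, nsmul_eq_mul]
    _ = 1 := (tsum_fintype _).symm.trans p.tsum_coe
  rw [uniformOfFintype_apply]
  exact ENNReal.eq_inv_of_mul_eq_one_left (by rwa [mul_comm])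

@[to_additive]
lemma map_monoidHom_uniformOfFintype {G H : Type*} [Group G] [Monoid H] [Fintype G] [Fintype H]
    {f : G →* H} (hf : Surjective f) :
    (uniformOfFintype G).map f = uniformOfFintype H := by
  classical
  refine eq_uniformOfFintype_of_forall_apply_eq fun x y ↦ ?_
  have map_apply_eq (z : H) : (uniformOfFintype G).map f z =
      Finset.card {g | f g = z} * (Fintype.card G : ℝ≥0∞)⁻¹ := by
    simp only [map_apply, uniformOfFintype_apply, tsum_fintype, ← Finset.sum_filter,
      Finset.sum_const, nsmul_eq_mul, eq_comm]
  rw [map_apply_eq, map_apply_eq, MonoidHom.card_fiber_eq_of_mem_range f (hf x) (hf y)]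

lemma shannonEntropy_map_of_injective {α β : Type} {f : α → β} (hf : Injective f) (p : PMF α) :
    shannonEntropy (p.map f) = shannonEntropy p := by
  have map_apply_apply (a : α) : p.map f (f a) = p a := by
    classical simp only [map_apply, hf.eq_iff, tsum_ite_eq']
  have support_subset :
      Function.support (fun b ↦ (p.map f b).toReal * Real.logb 2 (p.map f b).toReal) ⊆
        Set.range f := by
    intro b hb
    have b_mem : b ∈ (p.map f).support := (mem_support_iff _ _).2 fun map_apply_eq_zero ↦
      hb (by simp only [map_apply_eq_zero, ENNReal.toReal_zero, zero_mul])
    rw [support_map] at b_mem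
    exact Set.image_subset_range f _ b_mem
  simp only [shannonEntropy, ← hf.tsum_eq support_subset, map_apply_apply]

lemma shannonEntropy_uniformOfFintype (α : Type) [Fintype α] [Nonempty α] :
    shannonEntropy (uniformOfFintype α) = Real.logb 2 (Fintype.card α) := by
  have card_ne_zero : (Fintype.card α : ℝ) ≠ 0 := Nat.cast_ne_zero.2 Fintype.card_ne_zero
  simp only [shannonEntropy, uniformOfFintype_apply, ENNReal.toReal_inv, ENNReal.toReal_natCast,
    Real.logb_inv, tsum_fintype, Finset.sum_const, Finset.card_univ, nsmul_eq_mul]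
  field_simp

lemma shannonEntropy_uniformOfFintype_module (K M : Type) [DivisionRing K] [AddCommGroup M]
    [Module K M] [Fintype K] [Fintype M] :
    shannonEntropy (uniformOfFintype M) = Module.finrank K M * Real.logb 2 (Fintype.card K) := by
  rw [shannonEntropy_uniformOfFintype, Module.card_eq_pow_finrank (K := K), Nat.cast_pow,
    Real.logb_pow]

lemma injective_comp_inclusion_iSup {R M N ι : Type*} [Semiring R] [AddCommMonoid M]
    [AddCommMonoid N] [Module R M] [Module R N] (p : ι → Submodule R M) :
    Injective fun (f : ↥(⨆ i, p i) →ₗ[R] N) i ↦ f ∘ₗ Submodule.inclusion (le_iSup p i) := by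
  intro f g hfg
  ext ⟨x, hx⟩
  induction hx using Submodule.iSup_induction' with
  | mem i x hx => exact LinearMap.congr_fun (congr_fun hfg i) ⟨x, hx⟩
  | zero => exact f.map_zero.trans g.map_zero.symm
  | add x y hx hy ihx ihy =>
    simpa only [← map_add, AddMemClass.mk_add_mk] using congr_arg₂ (· + ·) ihx ihy

theorem entropy_of_restricted_uniform_functional_general
    {F V ι : Type} [Field F] [Fintype F] [AddCommGroup V] [Module F V]
    [Fintype (Module.Dual F V)] (U : ι → Subspace F V) :
    shannonEntropy ((uniformOfFintype (Module.Dual F V)).map fun φ i ↦ φ.domRestrict (U i)) =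
      Module.finrank F ↥(⨆ i, U i) * Real.logb 2 (Fintype.card F) := by
  let W := ⨆ i, U i
  have dualRestrict_surjective : Surjective W.dualRestrict := Subspace.dualRestrict_surjective
  have : Finite (Module.Dual F W) := .of_surjective _ dualRestrict_surjective
  have : Fintype (Module.Dual F W) := .ofFinite _
  calc shannonEntropy ((uniformOfFintype (Module.Dual F V)).map fun φ i ↦ φ.domRestrict (U i))
    _ = shannonEntropy (((uniformOfFintype (Module.Dual F V)).map W.dualRestrict).map
          fun ψ i ↦ ψ ∘ₗ Submodule.inclusion (le_iSup U i)) := by rw [map_comp]; rfl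
    _ = shannonEntropy ((uniformOfFintype (Module.Dual F V)).map W.dualRestrict) :=
      shannonEntropy_map_of_injective (injective_comp_inclusion_iSup U) _
    _ = shannonEntropy (uniformOfFintype (Module.Dual F W)) :=
      congr_arg _ (map_addMonoidHom_uniformOfFintype (f := W.dualRestrict.toAddMonoidHom)
        dualRestrict_surjective)
    _ = Module.finrank F W * Real.logb 2 (Fintype.card F) := by
      rw [shannonEntropy_uniformOfFintype_module F, Subspace.dual_finrank_eq]

/-- A uniformly random functional `X` on a finite-dimensional space over a finite
field, restricted to the subspaces `U i` for `i ∈ I`, has joint Shannon entropy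
`dim (∑_{i ∈ I} U i) · log₂ |F|`: the entropy vector is `log₂|F|` times the rank
vector of the subspace collection. -/
theorem entropy_of_restricted_uniform_functional
    (F : Type) [Field F] [Fintype F]
    (V : Type) [AddCommGroup V] [Module F V] [FiniteDimensional F V]
    [Fintype (Module.Dual F V)]
    (n : ℕ) (U : Fin n → Subspace F V) (I : Finset (Fin n)) :
    shannonEntropy
        (PMF.map
          (fun φ : Module.Dual F V => fun i : I => φ.domRestrict (U i.1))
          (PMF.uniformOfFintype (Module.Dual F V))) =
      (Module.finrank F ↥(⨆ i ∈ I, U i) : ℝ) * Real.logb 2 (Fintype.card F) := by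
  rw [iSup_subtype']
  exact entropy_of_restricted_uniform_functional_general fun i : I ↦ U i
end
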